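/- Consider the Bayesian model in which θ > 0 has a Gamma(α, β) prior with density π0(θ) = β^α θ^{α−1} e^{−βθ}/Γ(α), the noiseless count query s given θ is Poisson(θ), and the privatized query is s_obs = s + ε^{−1}u with u a standard Laplace random variable (the ε-Laplace mechanism for a counting query with global sensitivity 1). Then for every observed s_obs > 0, the unnormalized posterior density of θ given s_obs, namely π0(θ) · ∑_{k=0}^{∞} (e^{−θ} θ^k / k!) · (ε/2) e^{−ε|s_obs − k|}, equals C · θ^{α−1} e^{−(β+1)θ} · [ (Γ(⌈s_obs⌉, θ e^{ε}) / Γ(⌈s_obs⌉)) · e^{θ e^{ε} − ε s_obs} + (γ(⌈s_obs⌉, θ e^{−ε}) / Γ(⌈s_obs⌉)) · e^{θ e^{−ε} + ε s_obs} ], where C = ε β^α / (2 Γ(α)) is a constant not depending on θ; in particular the posterior density of θ given s_obs is proportional to the bracketed expression times θ^{α−1} e^{−(β+1)θ}. -/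

import Mathlib

open MeasureTheory Real

/-!
Split the sum over `k` at `⌈sobs⌉`. To the left of `sobs` the Laplace weight is
`e^{−ε·sobs} (e^ε)^k`, to the right it is `e^{ε·sobs} (e^{−ε})^k`, so up to constants the two
pieces are a partial sum of the exponential series at `θe^ε` and a tail of it at `θe^{−ε}`. The
partial sums of the exponential series are incomplete Gamma functions at positive integers,
because the derivative of `−e^{−x} ∑_{k ≤ n} x^k/k!` telescopes to `x^n e^{−x}/n!`.
-/

open Filter Topology
open scoped Nat

/-- The sum of the first `n` terms (degrees `0, …, n - 1`) of the exponential series at `x`. For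
`n ≥ 1` it is `e^x Γ(n, x) / Γ(n)`, the closed form of the upper incomplete Gamma function. -/
noncomputable def expPartialSum (n : ℕ) (x : ℝ) : ℝ :=
  ∑ k ∈ Finset.range n, x ^ k / k !

namespace expPartialSum

theorem succ (n : ℕ) (x : ℝ) : expPartialSum (n + 1) x = expPartialSum n x + x ^ n / n ! :=
  Finset.sum_range_succ ..

theorem hasDerivAt_succ (n : ℕ) (x : ℝ) :
    HasDerivAt (expPartialSum (n + 1)) (expPartialSum n x) x := by
  induction n with
  | zero =>
    have h_one : expPartialSum 1 = fun _ ↦ 1 := by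
      funext y
      simp [expPartialSum]
    simpa [h_one, expPartialSum] using hasDerivAt_const x (1 : ℝ)
  | succ n ih =>
    have h_monomial : HasDerivAt (fun y : ℝ ↦ y ^ (n + 1) / (n + 1)!) (x ^ n / n !) x := by
      refine ((hasDerivAt_pow (n + 1) x).div_const _).congr_deriv ?_
      rw [Nat.factorial_succ, Nat.cast_mul, Nat.add_sub_cancel,
        mul_div_mul_left _ _ (Nat.cast_ne_zero.mpr n.succ_ne_zero)]
    rw [funext (succ (n + 1)), succ n]
    exact ih.add h_monomial

theorem hasDerivAt_exp_neg_mul_succ (n : ℕ) (x : ℝ) :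
    HasDerivAt (fun y ↦ exp (-y) * expPartialSum (n + 1) y) (-(x ^ n * exp (-x) / n !)) x := by
  refine ((hasDerivAt_neg x).exp.mul (hasDerivAt_succ n x)).congr_deriv ?_
  rw [succ]
  ring

theorem tendsto_exp_neg_mul_atTop (n : ℕ) :
    Tendsto (fun x ↦ exp (-x) * expPartialSum n x) atTop (𝓝 0) := by
  have h_terms : Tendsto (fun x : ℝ ↦ ∑ k ∈ Finset.range n, x ^ k * exp (-x) / k !) atTop
      (𝓝 (∑ k ∈ Finset.range n, 0 / (k ! : ℝ))) :=
    tendsto_finsetSum _ fun k _ ↦ (tendsto_pow_mul_exp_neg_atTop_nhds_zero k).div_const _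
  simp only [zero_div, Finset.sum_const_zero] at h_terms
  refine h_terms.congr fun x ↦ ?_
  rw [expPartialSum, Finset.mul_sum]
  exact Finset.sum_congr rfl fun k _ ↦ by ring

end expPartialSum

theorem integrableOn_Ioi_pow_mul_exp_neg (n : ℕ) (x : ℝ) :
    IntegrableOn (fun r ↦ r ^ n * exp (-r)) (Set.Ioi x) := by
  refine integrable_of_isBigO_exp_neg one_half_pos (by fun_prop) ?_
  simpa only [rpow_natCast, mul_comm] using (Gamma_integrand_isLittleO n).isBigO

theorem integral_Ioi_pow_mul_exp_neg_div_factorial (n : ℕ) (x : ℝ) :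
    (∫ r in Set.Ioi x, r ^ n * exp (-r)) / n ! = exp (-x) * expPartialSum (n + 1) x := by
  have h_ftc := integral_Ioi_of_hasDerivAt_of_tendsto'
    (fun r _ ↦ expPartialSum.hasDerivAt_exp_neg_mul_succ n r)
    (((integrableOn_Ioi_pow_mul_exp_neg n x).div_const _).neg)
    (expPartialSum.tendsto_exp_neg_mul_atTop (n + 1))
  rw [integral_neg, integral_div, zero_sub] at h_ftc
  exact neg_inj.mp h_ftc

theorem integral_Ioi_div_factorial_mul_exp {n : ℕ} (hn : 0 < n) (x : ℝ) :
    (∫ r in Set.Ioi x, r ^ (n - 1) * exp (-r)) / (n - 1)! * exp x = expPartialSum n x := by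
  rw [integral_Ioi_pow_mul_exp_neg_div_factorial, Nat.sub_add_cancel hn, mul_right_comm,
    ← exp_add, neg_add_cancel, exp_zero, one_mul]

theorem factorial_sub_integral_Ioi_div_factorial_mul_exp {n : ℕ} (hn : 0 < n) (x : ℝ) :
    ((n - 1)! - ∫ r in Set.Ioi x, r ^ (n - 1) * exp (-r)) / (n - 1)! * exp x =
      exp x - expPartialSum n x := by
  rw [sub_div, div_self (Nat.cast_ne_zero.mpr (n - 1).factorial_ne_zero), sub_mul, one_mul,
    integral_Ioi_div_factorial_mul_exp hn]

theorem exp_neg_mul_abs_sub_natCast_of_le {s : ℝ} {k : ℕ} (ε : ℝ) (hk : (k : ℝ) ≤ s) :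
    exp (-ε * |s - k|) = exp (-(ε * s)) * exp ε ^ k := by
  rw [abs_of_nonneg (sub_nonneg.mpr hk), ← exp_nat_mul, ← exp_add]
  ring_nf

theorem exp_neg_mul_abs_sub_natCast_of_ge {s : ℝ} {k : ℕ} (ε : ℝ) (hk : s ≤ k) :
    exp (-ε * |s - k|) = exp (ε * s) * exp (-ε) ^ k := by
  rw [abs_of_nonpos (sub_nonpos.mpr hk), ← exp_nat_mul, ← exp_add]
  ring_nf

theorem hasSum_mul_exp_neg_mul_abs_sub {a : ℕ → ℝ} {ε S : ℝ} (s : ℝ)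
    (ha : HasSum (fun k ↦ a k * exp (-ε) ^ k) S) :
    HasSum (fun k : ℕ ↦ a k * exp (-ε * |s - k|))
      (exp (-(ε * s)) * ∑ k ∈ Finset.range ⌈s⌉₊, a k * exp ε ^ k +
        exp (ε * s) * (S - ∑ k ∈ Finset.range ⌈s⌉₊, a k * exp (-ε) ^ k)) := by
  have h_head : ∑ k ∈ Finset.range ⌈s⌉₊, a k * exp (-ε * |s - k|) =
      exp (-(ε * s)) * ∑ k ∈ Finset.range ⌈s⌉₊, a k * exp ε ^ k := by
    rw [Finset.mul_sum]
    refine Finset.sum_congr rfl fun k hk ↦ ?_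
    have hks : (k : ℝ) ≤ s := (Nat.lt_ceil.mp (Finset.mem_range.mp hk)).le
    rw [exp_neg_mul_abs_sub_natCast_of_le ε hks, mul_left_comm]
  have h_tail_term (k : ℕ) : a (k + ⌈s⌉₊) * exp (-ε * |s - (k + ⌈s⌉₊ : ℕ)|) =
      exp (ε * s) * (a (k + ⌈s⌉₊) * exp (-ε) ^ (k + ⌈s⌉₊)) := by
    have hsk : s ≤ (k + ⌈s⌉₊ : ℕ) := Nat.ceil_le.mp (Nat.le_add_left _ _)
    rw [exp_neg_mul_abs_sub_natCast_of_ge ε hsk, mul_left_comm]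
  have h_tail : HasSum (fun k : ℕ ↦ a (k + ⌈s⌉₊) * exp (-ε * |s - (k + ⌈s⌉₊ : ℕ)|))
      (exp (ε * s) * (S - ∑ k ∈ Finset.range ⌈s⌉₊, a k * exp (-ε) ^ k)) := by
    simp only [h_tail_term]
    exact ((hasSum_nat_add_iff' ⌈s⌉₊).mpr ha).mul_left _
  rw [← h_head]
  exact HasSum.sum_range_add (f := fun k : ℕ ↦ a k * exp (-ε * |s - k|)) h_tail

theorem hasSum_pow_div_factorial_mul_exp_neg_mul_abs_sub (ε s θ : ℝ) :
    HasSum (fun k : ℕ ↦ θ ^ k / k ! * exp (-ε * |s - k|))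
      (exp (-(ε * s)) * expPartialSum ⌈s⌉₊ (θ * exp ε) +
        exp (ε * s) * (exp (θ * exp (-ε)) - expPartialSum ⌈s⌉₊ (θ * exp (-ε)))) := by
  have h_pow (c : ℝ) (k : ℕ) : θ ^ k / k ! * c ^ k = (θ * c) ^ k / k ! := by
    rw [mul_pow, div_mul_eq_mul_div]
  have h_exp : HasSum (fun k : ℕ ↦ θ ^ k / k ! * exp (-ε) ^ k) (exp (θ * exp (-ε))) := by
    simp only [h_pow]
    rw [exp_eq_exp_ℝ]
    exact NormedSpace.expSeries_div_hasSum_exp _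
  simpa only [expPartialSum, h_pow] using hasSum_mul_exp_neg_mul_abs_sub s h_exp

theorem tsum_poisson_mul_laplace (ε s θ : ℝ) :
    ∑' k : ℕ, (exp (-θ) * θ ^ k / k !) * ((ε / 2) * exp (-ε * |s - k|)) =
      ε / 2 * exp (-θ) * (exp (-(ε * s)) * expPartialSum ⌈s⌉₊ (θ * exp ε) +
        exp (ε * s) * (exp (θ * exp (-ε)) - expPartialSum ⌈s⌉₊ (θ * exp (-ε)))) := by
  rw [← (hasSum_pow_div_factorial_mul_exp_neg_mul_abs_sub ε s θ).tsum_eq, ← tsum_mul_left]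
  exact tsum_congr fun k ↦ by ring

theorem tsum_poisson_mul_laplace_eq_incompleteGamma {s : ℝ} (hs : 0 < s) (ε θ : ℝ) :
    ∑' k : ℕ, (exp (-θ) * θ ^ k / k !) * ((ε / 2) * exp (-ε * |s - k|)) =
      ε / 2 * exp (-θ) *
        ((∫ r in Set.Ioi (θ * exp ε), r ^ (⌈s⌉₊ - 1) * exp (-r)) / (⌈s⌉₊ - 1)! *
            exp (θ * exp ε - ε * s) +
          ((⌈s⌉₊ - 1)! - ∫ r in Set.Ioi (θ * exp (-ε)), r ^ (⌈s⌉₊ - 1) * exp (-r)) /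
            (⌈s⌉₊ - 1)! * exp (θ * exp (-ε) + ε * s)) := by
  have h_ceil : 0 < ⌈s⌉₊ := Nat.ceil_pos.mpr hs
  rw [tsum_poisson_mul_laplace, sub_eq_add_neg (θ * exp ε), exp_add, exp_add, ← mul_assoc,
    ← mul_assoc, integral_Ioi_div_factorial_mul_exp h_ceil,
    factorial_sub_integral_Ioi_div_factorial_mul_exp h_ceil]
  ring

/-- **The posterior density in the Gamma–Poisson model under the ε-Laplace mechanism.**
With a `Gamma(α, β)` prior `π0(θ) = β^α θ^{α−1} e^{−βθ}/Γ(α)`, a Poisson(θ) noiseless count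
query, and privatized query `sobs = s + ε⁻¹u` with `u` standard Laplace, the unnormalized
posterior density of `θ` given `sobs > 0` satisfies
`π0(θ) · ∑_{k=0}^∞ (e^{−θ}θ^k/k!)·(ε/2)e^{−ε|sobs − k|}
  = C · θ^{α−1} e^{−(β+1)θ} · [ (Γ(⌈sobs⌉, θe^ε)/Γ(⌈sobs⌉))·e^{θe^ε − ε·sobs}
      + (γ(⌈sobs⌉, θe^{−ε})/Γ(⌈sobs⌉))·e^{θe^{−ε} + ε·sobs} ]`
with constant `C = εβ^α/(2Γ(α))` not depending on `θ`; in particular the posterior is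
proportional to the bracketed expression times `θ^{α−1}e^{−(β+1)θ}`. -/
theorem gamma_poisson_laplace_posterior
    (α β ε sobs θ : ℝ) (hα : 0 < α) (hβ : 0 < β) (hε : 0 < ε) (hs : 0 < sobs)
    (hθ : 0 < θ) (n : ℕ) (hn : n = ⌈sobs⌉₊) (C : ℝ) (hC : C = ε * β ^ α / (2 * Gamma α)) :
    (β ^ α * θ ^ (α - 1) * exp (-β * θ) / Gamma α) *
        ∑' k : ℕ, (exp (-θ) * θ ^ k / (Nat.factorial k : ℝ)) *
          ((ε / 2) * exp (-ε * |sobs - (k : ℝ)|)) =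
      C * (θ ^ (α - 1) * exp (-(β + 1) * θ)) *
        (((∫ r in Set.Ioi (θ * exp ε), r ^ (n - 1) * exp (-r)) /
              (Nat.factorial (n - 1) : ℝ)) * exp (θ * exp ε - ε * sobs) +
          (((Nat.factorial (n - 1) : ℝ) -
                ∫ r in Set.Ioi (θ * exp (-ε)), r ^ (n - 1) * exp (-r)) /
              (Nat.factorial (n - 1) : ℝ)) * exp (θ * exp (-ε) + ε * sobs)) := by
  have h_exp : exp (-(β + 1) * θ) = exp (-β * θ) * exp (-θ) := by
    rw [← exp_add]
    ring_nf
  rw [tsum_poisson_mul_laplace_eq_incompleteGamma hs, hn, hC, h_exp]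
  ring
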